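/- Let 0 ≤ a < b ≤ 1, M > 1, and suppose f, f_n ∈ G_M² for all n, where G_M = {g ∈ E : s/M ≤ g(s) ≤ Ms ∀s}. Write R*_X(x,y) = (y/(2x))·(y/x ∨ x/y)·(indicator adjustments) so that R*_X is continuous and bounded by M² on the range of M-good functions, and f' denotes the a.e. derivative. If f is differentiable on [a,b] and d(f_n,f) → 0, then limsup_n ∫_a^b √(R*_X(f_n(s))·f'_{n,X}(s)) ds ≤ ∫_a^b √(R*_X(f(s))·f'_X(s)) ds. -/

import Mathlib

open Filter Topology

/-- A member of the space `E`: a non-decreasing càdlàg function on `[0,1]` with `f(0) = 0`,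
extended to `ℝ` by constants. -/
def IsE (f : ℝ → ℝ) : Prop :=
  Monotone f ∧ f 0 = 0 ∧ (∀ x ≤ (0:ℝ), f x = 0) ∧ (∀ x, (1:ℝ) ≤ x → f x = f 1) ∧
    ∀ x, ContinuousWithinAt f (Set.Ici x) x

/-- The Lévy metric on `E`. -/
noncomputable def levyDist (f g : ℝ → ℝ) : ℝ :=
  sInf {r : ℝ | 0 < r ∧ ∀ x ∈ Set.Icc (-r) (1 + r), f (x - r) - r < g x ∧ g x < f (x + r) + r}

/-- Product (max) Lévy metric on `E²`. -/
noncomputable def dE2 (f g : (ℝ → ℝ) × (ℝ → ℝ)) : ℝ :=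
  max (levyDist f.1 g.1) (levyDist f.2 g.2)

/-- `f ∈ G_{M,T}`: `s/M − 2T^{−2/3} ≤ f(s) ≤ M(s + 2T^{−2/3})` for all `s ∈ [0,1]`. -/
def GoodMT (M T : ℝ) (f : ℝ → ℝ) : Prop :=
  ∀ s ∈ Set.Icc (0:ℝ) 1,
    s / M - 2 * T ^ (-(2:ℝ)/3) ≤ f s ∧ f s ≤ M * (s + 2 * T ^ (-(2:ℝ)/3))

/-- `f ∈ G_M`: `s/M ≤ f(s) ≤ Ms` for all `s ∈ [0,1]`. -/
def Good (M : ℝ) (f : ℝ → ℝ) : Prop :=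
  ∀ s ∈ Set.Icc (0:ℝ) 1, s / M ≤ f s ∧ f s ≤ M * s

/-- `f ∈ PL_n`: `f` is linear on each interval `[i/n, (i+1)/n]`. -/
def PLn (n : ℕ) (f : ℝ → ℝ) : Prop :=
  ∀ i : ℕ, i < n → ∀ s ∈ Set.Icc ((i:ℝ)/n) (((i:ℝ)+1)/n),
    f s = f ((i:ℝ)/n) + (s - (i:ℝ)/n) * ((n:ℝ) * (f (((i:ℝ)+1)/n) - f ((i:ℝ)/n)))

/-- `P*(x,y)`: limiting splitting probability. -/
noncomputable def PstarR (x y : ℝ) : ℝ :=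
  if x = 0 ∧ y = 0 then 1/2 else if y ≤ x then y / (2 * x) else 1 - x / (2 * y)

/-- `R*(x,y) = (x/y) ∨ (y/x)` (with `R*(0,0) = 1`). -/
noncomputable def RstarR (x y : ℝ) : ℝ :=
  if x = 0 ∧ y = 0 then 1 else max (x / y) (y / x)

/-- `R*_X = R*·P*` for `y > 0`, and `1/2` if `y = 0`. -/
noncomputable def RstarX (x y : ℝ) : ℝ :=
  if y = 0 then 1/2 else RstarR x y * PstarR x y

open MeasureTheory

lemma aux_intervalIntegrable_bdd {q : ℝ → ℝ} (hq : Measurable q) (C : ℝ)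
    (h0 : ∀ s, 0 ≤ q s) (hC : ∀ s, q s ≤ C) (u v : ℝ) : IntervalIntegrable q volume u v := by
  refine (intervalIntegrable_const (c := C)).mono_fun hq.aestronglyMeasurable ?_
  refine Eventually.of_forall fun s => ?_
  show ‖q s‖ ≤ ‖C‖
  rw [Real.norm_eq_abs, Real.norm_eq_abs, abs_of_nonneg (h0 s)]
  exact (hC s).trans (le_abs_self C)

lemma aux_sqrt_integrable {q g : ℝ → ℝ} (hq : Measurable q) (C : ℝ)
    (h0 : ∀ s, 0 ≤ q s) (hC : ∀ s, q s ≤ C) (hg : Monotone g) (u v : ℝ) :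
    IntervalIntegrable (fun s => Real.sqrt (q s * deriv g s)) volume u v := by
  have hd : IntervalIntegrable (deriv g) volume u v :=
    (hg.monotoneOn _).intervalIntegrable_deriv
  have hb : IntervalIntegrable (fun s => 1 + C * deriv g s) volume u v :=
    intervalIntegrable_const.add (hd.const_mul C)
  refine hb.mono_fun ?_ ?_
  · exact ((hq.mul (measurable_deriv g)).sqrt).aestronglyMeasurable
  · refine Eventually.of_forall fun s => ?_
    have hn : 0 ≤ deriv g s := hg.deriv_nonneg
    have h1 : q s * deriv g s ≤ C * deriv g s := mul_le_mul_of_nonneg_right (hC s) hn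
    have h2 : 0 ≤ q s * deriv g s := mul_nonneg (h0 s) hn
    show ‖Real.sqrt (q s * deriv g s)‖ ≤ ‖1 + C * deriv g s‖
    rw [Real.norm_eq_abs, Real.norm_eq_abs, abs_of_nonneg (Real.sqrt_nonneg _),
      abs_of_nonneg (by linarith)]
    rw [Real.sqrt_le_iff]
    constructor
    · linarith
    · nlinarith

lemma aux_cs {q g : ℝ → ℝ} (hq : Measurable q) (C : ℝ)
    (h0 : ∀ s, 0 ≤ q s) (hC : ∀ s, q s ≤ C) (hg : Monotone g) {u v : ℝ} (huv : u ≤ v) :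
    ∫ s in u..v, Real.sqrt (q s * deriv g s) ≤
      Real.sqrt ((∫ s in u..v, q s) * (g v - g u)) := by
  have hd : IntervalIntegrable (deriv g) volume u v :=
    (hg.monotoneOn _).intervalIntegrable_deriv
  have hqi := aux_intervalIntegrable_bdd hq C h0 hC u v
  have hs := aux_sqrt_integrable hq C h0 hC hg u v
  have hgn : ∀ s, 0 ≤ deriv g s := fun s => hg.deriv_nonneg
  have hle : ∫ s in u..v, deriv g s ≤ g v - g u := by
    have h := (hg.monotoneOn (Set.uIcc u v)).intervalIntegral_deriv_mem_uIcc
    rw [Set.uIcc_of_le (sub_nonneg.2 (hg huv))] at h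
    exact h.2
  have hq0 : 0 ≤ ∫ s in u..v, q s := intervalIntegral.integral_nonneg huv fun s _ => h0 s
  have hdis : discrim (∫ s in u..v, q s) (-2 * ∫ s in u..v, Real.sqrt (q s * deriv g s))
      (∫ s in u..v, deriv g s) ≤ 0 := by
    refine discrim_le_zero fun x => ?_
    have : (∫ s in u..v, q s) * (x * x) +
        (-2 * ∫ s in u..v, Real.sqrt (q s * deriv g s)) * x + (∫ s in u..v, deriv g s)
        = ∫ s in u..v, ((x * x) * q s + (-2 * x) * Real.sqrt (q s * deriv g s)) + deriv g s := by
      rw [intervalIntegral.integral_add ((hqi.const_mul _).add (hs.const_mul _)) hd,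
        intervalIntegral.integral_add (hqi.const_mul _) (hs.const_mul _),
        intervalIntegral.integral_const_mul, intervalIntegral.integral_const_mul]
      ring
    rw [this]
    refine intervalIntegral.integral_nonneg huv fun s _ => ?_
    rw [Real.sqrt_mul (h0 s)]
    have e1 := Real.sq_sqrt (h0 s)
    have e2 := Real.sq_sqrt (hgn s)
    nlinarith [sq_nonneg (x * Real.sqrt (q s) - Real.sqrt (deriv g s))]
  rw [discrim] at hdis
  apply Real.le_sqrt_of_sq_le
  nlinarith [mul_le_mul_of_nonneg_left hle hq0]

lemma aux_straddle {g : ℝ → ℝ} {g' s : ℝ} (hg : HasDerivAt g g' s) {u v : ℕ → ℝ}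
    (hus : ∀ m, u m ≤ s) (hsv : ∀ m, s ≤ v m) (huv : ∀ m, u m < v m)
    (hlim : Tendsto (fun m => v m - u m) atTop (𝓝 0)) :
    Tendsto (fun m => (g (v m) - g (u m)) / (v m - u m)) atTop (𝓝 g') := by
  have hu : Tendsto u atTop (𝓝 s) := by
    refine tendsto_of_tendsto_of_tendsto_of_le_of_le
      (by simpa using (tendsto_const_nhds (x := s)).sub hlim) tendsto_const_nhds ?_ hus
    intro m; have := hsv m; simp only; linarith
  have hv : Tendsto v atTop (𝓝 s) := by
    refine tendsto_of_tendsto_of_tendsto_of_le_of_le tendsto_const_nhds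
      (by simpa using (tendsto_const_nhds (x := s)).add hlim) hsv ?_
    intro m; have := hus m; simp only; linarith
  rw [Metric.tendsto_atTop']
  intro ε hε
  have ho := (hasDerivAt_iff_isLittleO.1 hg).def (half_pos hε)
  obtain ⟨N, hN⟩ := eventually_atTop.1 ((hu.eventually ho).and (hv.eventually ho))
  refine ⟨N, fun m hm => ?_⟩
  obtain ⟨h1, h2⟩ := hN m hm.le
  simp only [Real.norm_eq_abs, smul_eq_mul] at h1 h2
  rw [abs_of_nonpos (by linarith [hus m] : u m - s ≤ 0)] at h1
  rw [abs_of_nonneg (by linarith [hsv m] : 0 ≤ v m - s)] at h2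
  have hpos : 0 < v m - u m := sub_pos.2 (huv m)
  rw [Real.dist_eq, div_sub' hpos.ne', abs_div, abs_of_pos hpos, div_lt_iff₀ hpos]
  rw [abs_le] at h1 h2
  rw [abs_lt]
  constructor <;> nlinarith

/-- partition points -/
noncomputable def auxT (a b : ℝ) (m i : ℕ) : ℝ := a + i * ((b - a) / (m + 1))

lemma auxT_zero (a b : ℝ) (m : ℕ) : auxT a b m 0 = a := by simp [auxT]

lemma auxT_last (a b : ℝ) (m : ℕ) : auxT a b m (m + 1) = b := by
  have : (m : ℝ) + 1 ≠ 0 := by positivity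
  simp only [auxT]; push_cast; field_simp; ring

lemma auxT_succ (a b : ℝ) (m i : ℕ) :
    auxT a b m (i + 1) - auxT a b m i = (b - a) / (m + 1) := by
  simp only [auxT]; push_cast; ring

lemma auxT_mem {a b : ℝ} (hab : a < b) (m i : ℕ) (hi : i ≤ m + 1) :
    auxT a b m i ∈ Set.Icc a b := by
  have hm : (0 : ℝ) < m + 1 := by positivity
  have hd : 0 ≤ (b - a) / (m + 1) := div_nonneg (by linarith) hm.le
  have hi' : (i : ℝ) ≤ m + 1 := by exact_mod_cast hi
  constructor
  · simp only [auxT]; nlinarith [mul_nonneg (Nat.cast_nonneg (α := ℝ) i) hd]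
  · have := auxT_last a b m
    simp only [auxT] at this ⊢
    push_cast at this
    nlinarith

lemma aux_sum {a b C : ℝ} (hab : a < b) {F G F' G' : ℝ → ℝ} (hF : Monotone F)
    (hG : ∀ u v, u ≤ v → 0 ≤ G v - G u ∧ G v - G u ≤ C * (v - u))
    (hF' : ∀ s ∈ Set.Ioo a b, HasDerivAt F (F' s) s)
    (hG' : ∀ s ∈ Set.Ioo a b, HasDerivAt G (G' s) s)
    (hint : IntervalIntegrable (fun s => Real.sqrt (G' s * F' s)) volume a b)
    {ε : ℝ} (hε : 0 < ε) :
    ∃ m : ℕ, ∑ i ∈ Finset.range (m + 1),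
      Real.sqrt ((G (auxT a b m (i + 1)) - G (auxT a b m i)) *
        (F (auxT a b m (i + 1)) - F (auxT a b m i)))
      ≤ (∫ s in a..b, Real.sqrt (G' s * F' s)) + ε := by
  have hC : 0 ≤ C := by have := hG 0 1 (by norm_num); linarith [this.1, this.2]
  have hFab : 0 ≤ F b - F a := sub_nonneg.2 (hF hab.le)
  obtain ⟨K, hK0, hK⟩ : ∃ K : ℝ, 0 < K ∧ C * (F b - F a) / K ≤ ε / 2 := by
    refine ⟨2 * (C * (F b - F a) + 1) / ε, by positivity, ?_⟩
    rw [div_le_iff₀ (by positivity)]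
    field_simp
    linarith
  let δ : ℕ → ℝ := fun m => (b - a) / (m + 1)
  have hδ : ∀ m, 0 < δ m := fun m => div_pos (by linarith) (by positivity)
  have hδlim : Tendsto δ atTop (𝓝 0) := by
    have h := tendsto_one_div_add_atTop_nhds_zero_nat (𝕜 := ℝ)
    have h2 := h.const_mul (b - a)
    simpa [δ, div_eq_mul_inv] using h2
  let c : ℕ → ℕ → ℝ := fun m i =>
    Real.sqrt (((G (auxT a b m (i + 1)) - G (auxT a b m i)) / (auxT a b m (i + 1) - auxT a b m i)) *
        ((F (auxT a b m (i + 1)) - F (auxT a b m i)) / (auxT a b m (i + 1) - auxT a b m i)))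
  let idx : ℕ → ℝ → ℕ := fun m s => ⌊(s - a) / δ m⌋₊
  let S : ℕ → ℝ → ℝ := fun m s => min (c m (idx m s)) K
  have hTlt : ∀ m i, auxT a b m i < auxT a b m (i + 1) := fun m i => by
    have := auxT_succ a b m i; have := hδ m; simp only [δ] at this; linarith
  have hidx : ∀ m i, ∀ s ∈ Set.Ioo (auxT a b m i) (auxT a b m (i + 1)), idx m s = i := by
    intro m i s hs
    have h1 := hs.1
    have h2 := hs.2
    simp only [auxT] at h1 h2
    push_cast at h2
    have hd := hδ m
    simp only [idx]
    rw [Nat.floor_eq_iff (div_nonneg (by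
      have : 0 ≤ (i:ℝ) * δ m := by positivity
      simp only [δ] at this; linarith) hd.le)]
    rw [le_div_iff₀ hd, div_lt_iff₀ hd]
    simp only [δ]
    constructor <;> linarith
  have hSint : ∀ m, ∀ i < m + 1,
      IntervalIntegrable (S m) volume (auxT a b m i) (auxT a b m (i + 1)) := by
    intro m i _
    refine (intervalIntegrable_const (c := min (c m i) K)).congr_uIoo ?_
    rw [Set.uIoo_of_le (hTlt m i).le]
    intro s hs
    simp only [S, hidx m i s hs]
  have hSval : ∀ m i, ∫ s in (auxT a b m i)..(auxT a b m (i + 1)), S m s =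
      δ m * min (c m i) K := by
    intro m i
    rw [intervalIntegral.integral_congr_Ioo_of_le (g := fun _ => min (c m i) K) (hTlt m i).le]
    · rw [intervalIntegral.integral_const, auxT_succ]; rfl
    · intro s hs
      simp only [S, hidx m i s hs]
  have hSsum : ∀ m, ∑ i ∈ Finset.range (m + 1), δ m * min (c m i) K = ∫ s in a..b, S m s := by
    intro m
    have := intervalIntegral.sum_integral_adjacent_intervals (hSint m)
    rw [auxT_zero, auxT_last] at this
    rw [← this]
    exact Finset.sum_congr rfl fun i _ => (hSval m i).symm
  have hSI : ∀ m, IntervalIntegrable (S m) volume a b := by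
    intro m
    have := IntervalIntegrable.trans_iterate (hSint m)
    rwa [auxT_zero, auxT_last] at this
  have hS0 : ∀ m s, 0 ≤ S m s := fun m s => le_min (Real.sqrt_nonneg _) hK0.le
  have hbound : ∀ m, ∑ i ∈ Finset.range (m + 1),
      Real.sqrt ((G (auxT a b m (i + 1)) - G (auxT a b m i)) *
        (F (auxT a b m (i + 1)) - F (auxT a b m i))) ≤ (∫ s in a..b, S m s) + ε / 2 := by
    intro m
    have hterm : ∀ i ∈ Finset.range (m + 1),
        Real.sqrt ((G (auxT a b m (i + 1)) - G (auxT a b m i)) *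
        (F (auxT a b m (i + 1)) - F (auxT a b m i))) ≤ δ m * min (c m i) K +
          C / K * (F (auxT a b m (i + 1)) - F (auxT a b m i)) := by
      intro i _
      obtain ⟨g0, g1⟩ := hG _ _ (hTlt m i).le
      have f0 : 0 ≤ F (auxT a b m (i + 1)) - F (auxT a b m i) := sub_nonneg.2 (hF (hTlt m i).le)
      have hd := hδ m
      have hc : c m i = Real.sqrt (((G (auxT a b m (i + 1)) - G (auxT a b m i)) / δ m) *
        ((F (auxT a b m (i + 1)) - F (auxT a b m i)) / δ m)) := by
        simp only [c, auxT_succ]; rfl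
      have hTd : auxT a b m (i + 1) - auxT a b m i = δ m := auxT_succ a b m i
      rw [hTd] at g1
      generalize G (auxT a b m (i + 1)) - G (auxT a b m i) = A at *
      generalize F (auxT a b m (i + 1)) - F (auxT a b m i) = B at *
      generalize δ m = d at *
      have hc2 : c m i = Real.sqrt (A * B) / d := by
        rw [hc, div_mul_div_comm, Real.sqrt_div (mul_nonneg g0 f0), Real.sqrt_mul_self hd.le]
      have hr := Real.sqrt_nonneg (A * B)
      have hrs := Real.sq_sqrt (mul_nonneg g0 f0)
      rw [hc2]
      have hCB : 0 ≤ C / K * B := by positivity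
      rcases le_total (Real.sqrt (A * B) / d) K with h | h
      · rw [min_eq_left h, mul_div_cancel₀ _ hd.ne']
        linarith
      · have h' := h
        rw [le_div_iff₀ hd] at h'
        have : Real.sqrt (A * B) ≤ C / K * B := by
          rw [div_mul_eq_mul_div, le_div_iff₀ hK0]
          have hr0 : 0 < Real.sqrt (A * B) := lt_of_lt_of_le (by positivity) h'
          have h3 : A * B ≤ C * d * B := mul_le_mul_of_nonneg_right g1 f0
          by_contra hcon
          push Not at hcon
          nlinarith [mul_lt_mul_of_pos_right hcon hd, mul_le_mul_of_nonneg_left h' hr]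
        rw [min_eq_right h]
        have : 0 ≤ d * K := by positivity
        linarith
    refine (Finset.sum_le_sum hterm).trans ?_
    rw [Finset.sum_add_distrib, hSsum, ← Finset.mul_sum,
      Finset.sum_range_sub (fun i => F (auxT a b m i)), auxT_zero, auxT_last]
    have : C / K * (F b - F a) = C * (F b - F a) / K := by ring
    linarith
  have hlim : Tendsto (fun m => ∫ s in a..b, S m s) atTop
      (𝓝 (∫ s in a..b, min (Real.sqrt (G' s * F' s)) K)) := by
    refine intervalIntegral.tendsto_integral_filter_of_dominated_convergence (fun _ => K)
      (Eventually.of_forall fun m => by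
        rw [Set.uIoc_of_le hab.le]; exact (hSI m).1.aestronglyMeasurable) ?_ intervalIntegrable_const ?_
    · refine Eventually.of_forall fun m => Eventually.of_forall fun s _ => ?_
      rw [Real.norm_eq_abs, abs_of_nonneg (hS0 m s)]
      exact min_le_right _ _
    · filter_upwards [volume.ae_ne b] with s hsb hs
      rw [Set.uIoc_of_le hab.le] at hs
      have hsI : s ∈ Set.Ioo a b := ⟨hs.1, lt_of_le_of_ne hs.2 hsb⟩
      have h1 : ∀ m, auxT a b m (idx m s) ≤ s := fun m => by
        have := Nat.floor_le (div_nonneg (sub_nonneg.2 hs.1.le) (hδ m).le)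
        rw [le_div_iff₀ (hδ m)] at this
        simp only [auxT, idx]; simp only [δ] at this ⊢; linarith
      have h2 : ∀ m, s ≤ auxT a b m (idx m s + 1) := fun m => by
        have := (Nat.lt_floor_add_one ((s - a) / δ m)).le
        rw [div_le_iff₀ (hδ m)] at this
        simp only [auxT, idx]; push_cast; simp only [δ] at this ⊢; linarith
      have hl : Tendsto (fun m => auxT a b m (idx m s + 1) - auxT a b m (idx m s)) atTop (𝓝 0) := by
        simp only [auxT_succ]; exact hδlim
      have hA := aux_straddle (hG' s hsI) h1 h2 (fun m => hTlt m _) hl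
      have hB := aux_straddle (hF' s hsI) h1 h2 (fun m => hTlt m _) hl
      exact ((hA.mul hB).sqrt).min tendsto_const_nhds
  have hmin : ∫ s in a..b, min (Real.sqrt (G' s * F' s)) K ≤ ∫ s in a..b, Real.sqrt (G' s * F' s) := by
    refine intervalIntegral.integral_mono_on hab.le ?_ hint fun s _ => min_le_left _ _
    exact ⟨hint.1.inf (integrable_const K), hint.2.inf (integrable_const K)⟩
  obtain ⟨m, hm⟩ := (hlim.eventually (gt_mem_nhds (lt_add_of_pos_right _ (half_pos hε)))).exists
  exact ⟨m, by linarith [hbound m]⟩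

/-- truncated version of `RstarX` -/
noncomputable def auxQ (M : ℝ) (p : (ℝ → ℝ) × (ℝ → ℝ)) (s : ℝ) : ℝ :=
  max (1 / 2) (min (M ^ 2) (p.2 s / p.1 s - 1 / 2))

lemma auxQ_nonneg (M : ℝ) (p : (ℝ → ℝ) × (ℝ → ℝ)) (s : ℝ) : 0 ≤ auxQ M p s :=
  le_trans (by norm_num) (le_max_left _ _)

lemma auxQ_le {M : ℝ} (hM : 1 < M) (p : (ℝ → ℝ) × (ℝ → ℝ)) (s : ℝ) : auxQ M p s ≤ M ^ 2 :=
  max_le (by nlinarith) (min_le_left _ _)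

lemma auxQ_meas (M : ℝ) {p : (ℝ → ℝ) × (ℝ → ℝ)} (h1 : Monotone p.1) (h2 : Monotone p.2) :
    Measurable (auxQ M p) :=
  measurable_const.max (measurable_const.min ((h2.measurable.div h1.measurable).sub_const _))

lemma good_pos {M : ℝ} (hM : 1 < M) {g : ℝ → ℝ} (h : Good M g) {s : ℝ} (hs : s ∈ Set.Ioc (0:ℝ) 1) :
    0 < g s :=
  lt_of_lt_of_le (div_pos hs.1 (by linarith)) (h s ⟨hs.1.le, hs.2⟩).1

lemma auxQ_eq {M : ℝ} (hM : 1 < M) {p : (ℝ → ℝ) × (ℝ → ℝ)} (h1 : Good M p.1) (h2 : Good M p.2)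
    {s : ℝ} (hs : s ∈ Set.Ioc (0:ℝ) 1) : RstarX (p.1 s) (p.2 s) = auxQ M p s := by
  have hx := good_pos hM h1 hs
  have hy := good_pos hM h2 hs
  have hM0 : 0 < M := by linarith
  have e1 := (h1 s ⟨hs.1.le, hs.2⟩).1
  have e2 := (h2 s ⟨hs.1.le, hs.2⟩).2
  rw [div_le_iff₀ hM0] at e1
  unfold auxQ
  generalize p.1 s = x at *
  generalize p.2 s = y at *
  have hr : y / x ≤ M ^ 2 := by
    rw [div_le_iff₀ hx]; nlinarith
  rw [min_eq_right (by linarith)]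
  unfold RstarX RstarR PstarR
  rw [if_neg hy.ne', if_neg (by intro h; exact hx.ne' h.1), if_neg (by intro h; exact hx.ne' h.1)]
  split_ifs with h
  · have a1 : y / x ≤ 1 := by rw [div_le_one hx]; exact h
    have a2 : 1 ≤ x / y := by rw [one_le_div hy]; exact h
    rw [max_eq_left (by linarith), max_eq_left (by linarith)]
    field_simp
  · push Not at h
    have a1 : 1 ≤ y / x := by rw [one_le_div hx]; exact h.le
    have a2 : x / y ≤ 1 := by rw [div_le_one hy]; exact h.le
    rw [max_eq_right (by linarith), max_eq_right (by linarith)]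
    field_simp

lemma aux_cross_eq {M a b : ℝ} (ha : 0 ≤ a) (hab : a < b) (hb : b ≤ 1)
    (hM : 1 < M) {p : (ℝ → ℝ) × (ℝ → ℝ)} (h1 : Good M p.1) (h2 : Good M p.2) :
    ∫ s in a..b, Real.sqrt (RstarX (p.1 s) (p.2 s) * deriv p.1 s) =
    ∫ s in a..b, Real.sqrt (auxQ M p s * deriv p.1 s) := by
  refine intervalIntegral.integral_congr_Ioo_of_le hab.le fun s hs => ?_
  rw [auxQ_eq hM h1 h2 ⟨lt_of_le_of_lt ha hs.1, hs.2.le.trans hb⟩]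

lemma aux_levy {M : ℝ} (hM : 1 < M) {g : ℝ → ℝ} {gn : ℕ → ℝ → ℝ} (hg : IsE g)
    (hgn : ∀ n, IsE (gn n) ∧ Good M (gn n))
    (hconv : ∀ ε > 0, ∀ᶠ n in atTop, levyDist (gn n) g < ε) {s : ℝ} (hs : s ∈ Set.Icc (0:ℝ) 1)
    (hc : ContinuousAt g s) : Tendsto (fun n => gn n s) atTop (𝓝 (g s)) := by
  rw [Metric.tendsto_nhds]
  intro ε hε
  obtain ⟨η, hη, hcη⟩ := Metric.continuousAt_iff.1 hc (ε / 2) (half_pos hε)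
  have hpos : 0 < min (η / 2) (ε / 2) := lt_min (half_pos hη) (half_pos hε)
  filter_upwards [hconv _ hpos] with n hn
  unfold levyDist at hn
  obtain ⟨r, ⟨hr0, hr⟩, hrlt⟩ := exists_lt_of_csInf_lt (by
    have hub : ∀ x, gn n x ≤ M := fun x => by
      have h1 : gn n 1 ≤ M * 1 := ((hgn n).2 1 (by simp)).2
      rcases le_total x 1 with h | h
      · exact ((hgn n).1.1 h).trans (by linarith)
      · rw [(hgn n).1.2.2.2.1 x h]; linarith
    have hlb : ∀ k : ℝ → ℝ, IsE k → ∀ x, 0 ≤ k x := fun k hk x => by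
      rcases le_total x 0 with h | h
      · rw [hk.2.2.1 x h]
      · rw [← hk.2.1]; exact hk.1 h
    have hgb : ∀ x, g x ≤ g 1 := fun x => by
      rcases le_total x 1 with h | h
      · exact hg.1 h
      · rw [hg.2.2.2.1 x h]
    have := hlb g hg 1
    refine ⟨M + g 1 + 1, by linarith, fun x _ => ⟨?_, ?_⟩⟩
    · linarith [hub (x - (M + g 1 + 1)), hlb g hg x]
    · linarith [hlb _ (hgn n).1 (x + (M + g 1 + 1)), hgb x]) hn
  have hr1 : r < η / 2 := hrlt.trans_le (min_le_left _ _)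
  have hr2 : r < ε / 2 := hrlt.trans_le (min_le_right _ _)
  have k1 := (hr (s + r) ⟨by linarith [hs.1], by linarith [hs.2]⟩).1
  have k2 := (hr (s - r) ⟨by linarith [hs.1], by linarith [hs.2]⟩).2
  rw [add_sub_cancel_right] at k1
  rw [sub_add_cancel] at k2
  have c1 := @hcη (s + r) (by rw [Real.dist_eq, add_sub_cancel_left, abs_of_pos hr0]; linarith)
  have c2 := @hcη (s - r) (by
    rw [Real.dist_eq, sub_sub_cancel_left, abs_neg, abs_of_pos hr0]; linarith)
  rw [Real.dist_eq, abs_lt] at c1 c2 ⊢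
  constructor <;> linarith [c1.1, c1.2, c2.1, c2.2]

/-- Upper semicontinuity of the cross term: if `f, f_n ∈ G_M²`, `f` is differentiable on
`[a,b]` and `d(f_n, f) → 0`, then
`limsup ∫_a^b √(R*_X(f_n) f'_{n,X}) ≤ ∫_a^b √(R*_X(f) f'_X)`. -/
theorem limsup_sqrt_cross_term (a b M : ℝ) (ha : 0 ≤ a) (hab : a < b) (hb : b ≤ 1)
    (hM : 1 < M) (f : (ℝ → ℝ) × (ℝ → ℝ)) (fn : ℕ → (ℝ → ℝ) × (ℝ → ℝ))
    (hf : IsE f.1 ∧ IsE f.2 ∧ Good M f.1 ∧ Good M f.2)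
    (hfn : ∀ n, IsE (fn n).1 ∧ IsE (fn n).2 ∧ Good M (fn n).1 ∧ Good M (fn n).2)
    (hdiff : ∀ s ∈ Set.Icc a b, DifferentiableAt ℝ f.1 s ∧ DifferentiableAt ℝ f.2 s)
    (hconv : Tendsto (fun n => dE2 (fn n) f) atTop (nhds 0)) :
    Filter.limsup
        (fun n => ∫ s in a..b,
          Real.sqrt (RstarX ((fn n).1 s) ((fn n).2 s) * deriv (fn n).1 s)) atTop
      ≤ ∫ s in a..b, Real.sqrt (RstarX (f.1 s) (f.2 s) * deriv f.1 s) := by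
  obtain ⟨hE1, hE2, hG1, hG2⟩ := hf
  have hcv1 : ∀ ε > 0, ∀ᶠ n in atTop, levyDist (fn n).1 f.1 < ε := fun ε hε => by
    filter_upwards [hconv.eventually (gt_mem_nhds hε)] with n hn
    exact lt_of_le_of_lt (le_max_left _ _) hn
  have hcv2 : ∀ ε > 0, ∀ᶠ n in atTop, levyDist (fn n).2 f.2 < ε := fun ε hε => by
    filter_upwards [hconv.eventually (gt_mem_nhds hε)] with n hn
    exact lt_of_le_of_lt (le_max_right _ _) hn
  have hab01 : ∀ s ∈ Set.Icc a b, s ∈ Set.Icc (0:ℝ) 1 := fun s hs =>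
    ⟨ha.trans hs.1, hs.2.trans hb⟩
  have hp1 : ∀ s ∈ Set.Icc a b, Tendsto (fun n => (fn n).1 s) atTop (𝓝 (f.1 s)) := fun s hs =>
    aux_levy hM hE1 (fun n => ⟨(hfn n).1, (hfn n).2.2.1⟩) hcv1 (hab01 s hs)
      (hdiff s hs).1.continuousAt
  have hp2 : ∀ s ∈ Set.Icc a b, Tendsto (fun n => (fn n).2 s) atTop (𝓝 (f.2 s)) := fun s hs =>
    aux_levy hM hE2 (fun n => ⟨(hfn n).2.1, (hfn n).2.2.2⟩) hcv2 (hab01 s hs)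
      (hdiff s hs).2.continuousAt
  have hQm : ∀ n, Measurable (auxQ M (fn n)) := fun n => auxQ_meas M (hfn n).1.1 (hfn n).2.1.1
  have hQm0 : Measurable (auxQ M f) := auxQ_meas M hE1.1 hE2.1
  have hQi : ∀ u v, IntervalIntegrable (auxQ M f) volume u v :=
    aux_intervalIntegrable_bdd hQm0 (M ^ 2) (auxQ_nonneg M f) (auxQ_le hM f)
  have hQlim : ∀ u v, a ≤ u → u ≤ v → v ≤ b → Tendsto (fun n => ∫ s in u..v, auxQ M (fn n) s) atTop
      (𝓝 (∫ s in u..v, auxQ M f s)) := by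
    intro u v hu huv hv
    refine intervalIntegral.tendsto_integral_filter_of_dominated_convergence (fun _ => M ^ 2)
      (Eventually.of_forall fun n => (hQm n).aestronglyMeasurable) ?_ intervalIntegrable_const ?_
    · refine Eventually.of_forall fun n => Eventually.of_forall fun s _ => ?_
      rw [Real.norm_eq_abs, abs_of_nonneg (auxQ_nonneg _ _ _)]
      exact auxQ_le hM _ _
    · refine Eventually.of_forall fun s hs => ?_
      rw [Set.uIoc_of_le huv] at hs
      have hsI : s ∈ Set.Icc a b := ⟨hu.trans hs.1.le, hs.2.trans hv⟩
      have h0 : 0 < f.1 s := good_pos hM hG1 ⟨by linarith [hs.1], (hab01 s hsI).2⟩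
      exact tendsto_const_nhds.max (tendsto_const_nhds.min
        (((hp2 s hsI).div (hp1 s hsI) h0.ne').sub_const _))
  rw [aux_cross_eq ha hab hb hM hG1 hG2]
  have hrew : (fun n => ∫ s in a..b,
          Real.sqrt (RstarX ((fn n).1 s) ((fn n).2 s) * deriv (fn n).1 s)) =
      fun n => ∫ s in a..b, Real.sqrt (auxQ M (fn n) s * deriv (fn n).1 s) :=
    funext fun n => aux_cross_eq ha hab hb hM (hfn n).2.2.1 (hfn n).2.2.2
  rw [hrew]
  refine le_of_forall_pos_le_add fun ε hε => ?_
  have hGsub : ∀ u v, (∫ s in a..v, auxQ M f s) - (∫ s in a..u, auxQ M f s) =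
      ∫ s in u..v, auxQ M f s := fun u v =>
    intervalIntegral.integral_interval_sub_left (hQi a v) (hQi a u)
  obtain ⟨m, hm⟩ := aux_sum (C := M ^ 2) hab (F := f.1) (G := fun t => ∫ s in a..t, auxQ M f s)
    (F' := deriv f.1) (G' := auxQ M f) hE1.1
    (by
      intro u v huv
      rw [hGsub]
      refine ⟨intervalIntegral.integral_nonneg huv fun s _ => auxQ_nonneg _ _ _, ?_⟩
      have := intervalIntegral.integral_mono_on huv (hQi u v)
        (intervalIntegrable_const (c := M ^ 2)) (fun s _ => auxQ_le hM f s)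
      rw [intervalIntegral.integral_const, smul_eq_mul] at this
      linarith)
    (fun s hs => (hdiff s ⟨hs.1.le, hs.2.le⟩).1.hasDerivAt)
    (by
      intro s hs
      have hsI : s ∈ Set.Icc a b := ⟨hs.1.le, hs.2.le⟩
      have h0 : 0 < f.1 s := good_pos hM hG1 ⟨by linarith [hs.1], (hab01 s hsI).2⟩
      refine intervalIntegral.integral_hasDerivAt_right (hQi a s)
        hQm0.stronglyMeasurable.stronglyMeasurableAtFilter ?_
      exact continuousAt_const.max (continuousAt_const.min
        (((hdiff s hsI).2.continuousAt.div (hdiff s hsI).1.continuousAt h0.ne').sub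
          continuousAt_const)))
    (aux_sqrt_integrable hQm0 (M ^ 2) (auxQ_nonneg M f) (auxQ_le hM f) hE1.1 a b)
    (half_pos hε)
  have hTle : ∀ i, auxT a b m i ≤ auxT a b m (i + 1) := fun i => by
    have h1 := auxT_succ a b m i
    have h2 : 0 ≤ (b - a) / ((m : ℝ) + 1) := div_nonneg (by linarith) (by positivity)
    linarith
  have hsumlim : Tendsto (fun n => ∑ i ∈ Finset.range (m + 1),
      Real.sqrt ((∫ s in (auxT a b m i)..(auxT a b m (i + 1)), auxQ M (fn n) s) *
        ((fn n).1 (auxT a b m (i + 1)) - (fn n).1 (auxT a b m i)))) atTop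
      (𝓝 (∑ i ∈ Finset.range (m + 1),
      Real.sqrt ((∫ s in (auxT a b m i)..(auxT a b m (i + 1)), auxQ M f s) *
        (f.1 (auxT a b m (i + 1)) - f.1 (auxT a b m i))))) := by
    refine tendsto_finsetSum _ fun i hi => ?_
    rw [Finset.mem_range] at hi
    have m1 := auxT_mem hab m i (by omega)
    have m2 := auxT_mem hab m (i + 1) (by omega)
    exact ((hQlim _ _ m1.1 (hTle i) m2.2).mul ((hp1 _ m2).sub (hp1 _ m1))).sqrt
  simp only [hGsub] at hm
  refine limsup_le_of_le (isCoboundedUnder_le_of_le atTop (x := 0) fun n =>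
    intervalIntegral.integral_nonneg hab.le fun s _ => Real.sqrt_nonneg _) ?_
  filter_upwards [hsumlim.eventually (gt_mem_nhds (lt_add_of_pos_right _ (half_pos hε)))] with n hn
  have hsplit := intervalIntegral.sum_integral_adjacent_intervals (μ := volume)
    (f := fun s => Real.sqrt (auxQ M (fn n) s * deriv (fn n).1 s)) (a := auxT a b m) (n := m + 1)
    (fun k _ => aux_sqrt_integrable (hQm n) (M ^ 2) (auxQ_nonneg M _) (auxQ_le hM _)
      (hfn n).1.1 _ _)
  rw [auxT_zero, auxT_last] at hsplit
  rw [← hsplit]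
  have hle := Finset.sum_le_sum fun i (_ : i ∈ Finset.range (m + 1)) =>
    aux_cs (hQm n) (M ^ 2) (auxQ_nonneg M _) (auxQ_le hM _) (hfn n).1.1 (hTle i)
  linarith
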